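/- Let d ≥ 1, let p > 1 with conjugate exponent q satisfying 1/p + 1/q = 1, and let μ, ν be Borel probability measures on ℝ^d with finite p-th moments. Then the infimum, taken over all convex functions f : ℝ^d → ℝ that are integrable with respect to both μ and ν, of (∫ f dν − ∫ f dμ), equals the infimum over all Borel probability measures ρ on ℝ^d with finite q-th moment of (C(ν,ρ) − C(μ,ρ)), where both infima are taken in the extended reals [−∞, ∞]. -/

import Mathlib

open MeasureTheory Metric RealInnerProductSpace

noncomputable section

/-- The set of couplings of two measures on `ℝ^d`. -/
def Couplings {d : ℕ} (α β : Measure (EuclideanSpace ℝ (Fin d))) :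
    Set (Measure (EuclideanSpace ℝ (Fin d) × EuclideanSpace ℝ (Fin d))) :=
  {π | π.map Prod.fst = α ∧ π.map Prod.snd = β}

/-- `C(α,β) = sup_{π ∈ Π(α,β)} ∫ ⟨x,y⟩ dπ`. -/
def OTcost {d : ℕ} (α β : Measure (EuclideanSpace ℝ (Fin d))) : ℝ :=
  sSup {r : ℝ | ∃ π ∈ Couplings α β, r = ∫ p, ⟪p.1, p.2⟫ ∂π}

open ProbabilityTheory Set Filter Topology ENNReal

/-
For a finitely supported measure `ρ = P.map y`, dual potentials can be taken of the form
`f = maxᵢ (⟪·, y i⟫ - g i)`, with `C(α, ρ) ≤ ∫ f dα + ∫ g dP` for every `g`. Equality for `α = ν`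
gives `∫ f dν - ∫ f dμ ≤ C(ν, ρ) - C(μ, ρ)`, and equality for `α = μ` gives the reverse inequality.

Given `f`, equality for `μ` is reached by letting `P` be the law under `μ` of an index attaining the
maximum. Given `P`, equality for `ν` is reached by letting `g` be a supergradient at `P` of the
concave function `Q ↦ C(ν, Q.map y)`: compare `P` with the law `Q` of the maximizing index for `g`.

The general case follows by approximation: a simple function close to the identity in `L^q(ρ)`
replaces `ρ` by a finitely supported measure, and a convex function on `ℝ^d` is the increasing limit
of maxima of finitely many affine functions.
-/

theorem exists_measurable_argmax {Ω ι R : Type*} [MeasurableSpace Ω] [MeasurableSpace ι] [Finite ι]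
    [Nonempty ι] [LinearOrder R] [TopologicalSpace R] [OrderClosedTopology R]
    [SecondCountableTopology R] [MeasurableSpace R] [OpensMeasurableSpace R]
    {l : ι → Ω → R} (hl : ∀ i, Measurable (l i)) :
    ∃ s : Ω → ι, Measurable s ∧ ∀ ω i, l i ω ≤ l (s ω) ω := by
  classical
  obtain ⟨e, he⟩ := exists_surjective_nat ι
  have hmax : ∀ ω, ∃ n, ∀ i, l i ω ≤ l (e n) ω := fun ω ↦ by
    obtain ⟨j, hj⟩ := Finite.exists_max (l · ω)
    obtain ⟨n, rfl⟩ := he j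
    exact ⟨n, hj⟩
  refine ⟨fun ω ↦ e (Nat.find (hmax ω)), measurable_from_nat.comp (measurable_find hmax fun n ↦ ?_),
    fun ω ↦ Nat.find_spec (hmax ω)⟩
  exact .congr (.iInter fun i ↦ measurableSet_le (hl i) (hl (e n))) (by ext; simp)

theorem mem_interior_hypograph {E : Type*} [TopologicalSpace E] {s : Set E} {F : E → ℝ} {w : E}
    (hs : s ∈ 𝓝 w) (hF : ContinuousAt F w) {t : ℝ} (ht : t < F w) :
    (w, t) ∈ interior {z : E × ℝ | z.1 ∈ s ∧ z.2 ≤ F z.1} := by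
  have hlt : ∀ᶠ z : E × ℝ in 𝓝 (w, t), z.2 < F z.1 :=
    continuousAt_snd.eventually_lt (hF.comp' continuousAt_fst) ht
  refine mem_interior_iff_mem_nhds.2 ?_
  filter_upwards [continuousAt_fst.eventually hs, hlt] with z hz hz' using ⟨hz, hz'.le⟩

theorem notMem_interior_hypograph {E : Type*} [TopologicalSpace E] (s : Set E) (F : E → ℝ) (w : E) :
    (w, F w) ∉ interior {z : E × ℝ | z.1 ∈ s ∧ z.2 ≤ F z.1} := by
  intro h
  have hvert : Tendsto (fun t ↦ (w, t)) (𝓝[>] F w) (𝓝 (w, F w)) :=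
    (Continuous.tendsto (by fun_prop) (F w)).mono_left nhdsWithin_le_nhds
  obtain ⟨t, ht, hlt⟩ :=
    ((hvert.eventually (mem_interior_iff_mem_nhds.1 h)).and self_mem_nhdsWithin).exists
  exact hlt.not_ge ht.2

theorem exists_supergradient {E : Type*} [NormedAddCommGroup E] [NormedSpace ℝ E] {s : Set E}
    {F : E → ℝ} {w : E} (hF : ConcaveOn ℝ s F) (hs : s ∈ 𝓝 w) (hcont : ContinuousAt F w) :
    ∃ L : E →L[ℝ] ℝ, ∀ v ∈ s, F v ≤ F w + L (v - w) := by
  have hbelow := mem_interior_hypograph hs hcont (sub_one_lt (F w))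
  obtain ⟨f, hf, hfle⟩ := geometric_hahn_banach_of_nonempty_interior_point hF.convex_hypograph
    (notMem_interior_hypograph s F w) ⟨_, hbelow⟩
  let ℓ : E →L[ℝ] ℝ := f.comp (.inl ℝ E ℝ)
  let c : ℝ := f (0, 1)
  have hsplit : ∀ v t, f (v, t) = ℓ v + c * t := fun v t ↦ by
    rw [mul_comm, ← smul_eq_mul, ← map_smul, ContinuousLinearMap.comp_apply, ← map_add]
    simp
  have hle : ∀ v ∈ s, ∀ t ≤ F v, ℓ v + c * t ≤ ℓ w + c * F w := fun v hv t ht ↦ by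
    simpa only [hsplit] using hfle (v, t) ⟨hv, ht⟩
  have hc_nonneg : 0 ≤ c := by linarith [hle w (mem_of_mem_nhds hs) _ (sub_one_lt (F w)).le]
  -- A vertical separating hyperplane is impossible: `ℓ` would be maximal at the interior point `w`.
  have hc_ne : c ≠ 0 := fun hc ↦ hf <| by
    have hmax : IsLocalMax ℓ w := by
      filter_upwards [hs] with v hv
      simpa [hc] using hle v hv _ le_rfl
    ext v
    · exact DFunLike.congr_fun (hmax.hasFDerivAt_eq_zero ℓ.hasFDerivAt) v
    · simpa using hc
  refine ⟨-(c⁻¹ • ℓ), fun v hv ↦ ?_⟩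
  have hdiv := mul_le_mul_of_nonneg_left (hle v hv _ le_rfl) (inv_nonneg.2 hc_nonneg)
  rw [mul_add, mul_add, inv_mul_cancel_left₀ hc_ne, inv_mul_cancel_left₀ hc_ne] at hdiv
  simp only [neg_apply, smul_apply, smul_eq_mul, map_sub]
  linarith

theorem compProd_comap_map_prodMap {Ω X Y : Type*} [MeasurableSpace Ω] [MeasurableSpace X]
    [MeasurableSpace Y] (P : Measure Ω) [SFinite P] (κ : Kernel Y X) [IsSFiniteKernel κ] {T : Ω → Y}
    (hT : Measurable T) :
    (P ⊗ₘ κ.comap T hT).map (Prod.map T id) = P.map T ⊗ₘ κ := by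
  ext s hs
  rw [Measure.map_apply (by fun_prop) hs, Measure.compProd_apply (by measurability),
    Measure.compProd_apply hs, lintegral_map (Kernel.measurable_kernel_prodMk_left hs) hT]
  rfl

theorem exists_measure_map_snd_eq_map_prodMap_eq {Ω X Y : Type*} [MeasurableSpace Ω]
    [MeasurableSpace X] [StandardBorelSpace X] [Nonempty X] [MeasurableSpace Y]
    {π : Measure (X × Y)} [IsFiniteMeasure π] {P : Measure Ω} [SFinite P] {T : Ω → Y}
    (hT : Measurable T) (h : π.map Prod.snd = P.map T) :
    ∃ γ : Measure (X × Ω), γ.map Prod.snd = P ∧ γ.map (Prod.map id T) = π := by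
  have hfst : (π.map Prod.swap).fst = P.map T := by rw [Measure.fst_map_swap, Measure.snd, h]
  refine ⟨(P ⊗ₘ (π.map Prod.swap).condKernel.comap T hT).map Prod.swap, ?_, ?_⟩
  · rw [← Measure.snd, Measure.snd_map_swap, Measure.fst_compProd]
  · have hcomm : Prod.map id T ∘ Prod.swap = Prod.swap ∘ Prod.map T (id : X → X) := rfl
    rw [Measure.map_map (by fun_prop) measurable_swap, hcomm,
      ← Measure.map_map measurable_swap (by fun_prop), compProd_comap_map_prodMap, ← hfst,
      Measure.disintegrate, Measure.map_map measurable_swap measurable_swap]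
    simp

section FiniteSupport

variable {X : Type*} [MeasurableSpace X] (η : Measure X) {s : Set X}

theorem ae_measure_singleton_ne_zero (hs : s.Countable) : ∀ᵐ x ∂η, x ∈ s → η {x} ≠ 0 := by
  have hnull : η {x ∈ s | η {x} = 0} = 0 :=
    (measure_null_iff_singleton (hs.mono (sep_subset _ _))).2 fun x hx ↦ hx.2
  filter_upwards [measure_eq_zero_iff_ae_notMem.1 hnull] with x hx hxs hx0 using hx ⟨hxs, hx0⟩

theorem exists_finite_measure_map_val_eq [MeasurableSingletonClass X] (hs : s.Finite)
    (hη : ∀ᵐ x ∂η, x ∈ s) :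
    ∃ S : Set X, S.Finite ∧ ∃ P : Measure S, (∀ i, P {i} ≠ 0) ∧ P.map Subtype.val = η := by
  let S : Set X := {x ∈ s | η {x} ≠ 0}
  have hSfin : S.Finite := hs.subset (sep_subset _ _)
  have hS : ∀ᵐ x ∂η, x ∈ S := by
    filter_upwards [hη, ae_measure_singleton_ne_zero η hs.countable] with x hx hne
      using ⟨hx, hne hx⟩
  refine ⟨S, hSfin, η.comap Subtype.val, fun i ↦ ?_, ?_⟩
  · rw [comap_subtype_coe_apply hSfin.measurableSet, image_singleton]
    exact i.2.2
  · rw [map_comap_subtype_coe hSfin.measurableSet, Measure.restrict_eq_self_of_ae_mem hS]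

end FiniteSupport

theorem exists_simpleFunc_dist_lt_of_isCompact {X : Type*} [PseudoMetricSpace X]
    [TopologicalSpace.SeparableSpace X] [MeasurableSpace X] [OpensMeasurableSpace X] [Nonempty X]
    {K : Set X} (hK : IsCompact K) {δ : ℝ} (hδ : 0 < δ) :
    ∃ T : SimpleFunc X X, ∀ x ∈ K, dist (T x) x < δ := by
  let e := TopologicalSpace.denseSeq X
  have hcover : K ⊆ ⋃ k, ball (e k) δ := fun x _ ↦
    mem_iUnion.2 ((TopologicalSpace.denseRange_denseSeq X).exists_dist_lt x hδ)
  obtain ⟨t, ht⟩ := hK.elim_finite_subcover _ (fun _ ↦ isOpen_ball) hcover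
  refine ⟨SimpleFunc.nearestPt e (t.sup id), fun x hx ↦ ?_⟩
  obtain ⟨k, hk, hxk⟩ := mem_iUnion₂.1 (ht hx)
  have hle := SimpleFunc.edist_nearestPt_le e x (Finset.le_sup (f := id) hk)
  rw [edist_dist, edist_dist, ofReal_le_ofReal_iff dist_nonneg] at hle
  exact hle.trans_lt (mem_ball'.1 hxk)

section Lp

variable {Ω Ω' F : Type*} [MeasurableSpace Ω] [MeasurableSpace Ω'] [NormedAddCommGroup F]
  {p : ℝ≥0∞} {P : Measure Ω} {Q : Measure Ω'}

theorem lpNorm_comp_measurePreserving {φ : Ω → Ω'} {X : Ω' → F} (hX : AEStronglyMeasurable X Q)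
    (hφ : MeasurePreserving φ P Q) : lpNorm (X ∘ φ) p P = lpNorm X p Q := by
  rw [← toReal_eLpNorm hX, ← toReal_eLpNorm (hX.comp_measurePreserving hφ),
    eLpNorm_comp_measurePreserving hX hφ]

variable [MeasurableSpace F] [BorelSpace F]

theorem exists_simpleFunc_eLpNorm_top_id_sub_lt [ProperSpace F] {ρ : Measure F}
    (hρ : MemLp id ∞ ρ) {ε : ℝ≥0∞} (hε : ε ≠ 0) :
    ∃ T : SimpleFunc F F, eLpNorm (id - ⇑T) ∞ ρ < ε := by
  obtain ⟨δ, -, hδε⟩ := ENNReal.lt_iff_exists_real_btwn.1 (pos_iff_ne_zero.2 hε)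
  obtain ⟨T, hT⟩ := exists_simpleFunc_dist_lt_of_isCompact
    (isCompact_closedBall (0 : F) (lpNorm id ∞ ρ)) (ofReal_pos.1 hδε.1)
  refine ⟨T, lt_of_le_of_lt ?_ hδε.2⟩
  rw [eLpNorm_exponent_top]
  refine eLpNormEssSup_le_of_ae_bound ?_
  filter_upwards [ae_le_lpNorm_exponent_top hρ] with x hx
  rw [Pi.sub_apply, ← dist_eq_norm, dist_comm]
  exact (hT x (mem_closedBall_zero_iff.2 hx)).le

theorem exists_simpleFunc_lpNorm_id_sub_lt [ProperSpace F] {ρ : Measure F}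
    (hρ : MemLp id p ρ) {δ : ℝ} (hδ : 0 < δ) :
    ∃ T : SimpleFunc F F, lpNorm (id - ⇑T) p ρ < δ := by
  have hT : ∃ T : SimpleFunc F F, eLpNorm (id - ⇑T) p ρ < ENNReal.ofReal δ := by
    obtain rfl | hp := eq_or_ne p ∞
    · exact exists_simpleFunc_eLpNorm_top_id_sub_lt hρ (ofReal_pos.2 hδ).ne'
    · exact (hρ.exists_simpleFunc_eLpNorm_sub_lt hp (ofReal_pos.2 hδ).ne').imp fun _ ↦ And.left
  refine hT.imp fun T hT ↦ ?_
  rw [← toReal_eLpNorm (hρ.1.sub T.aestronglyMeasurable)]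
  exact toReal_lt_of_lt_ofReal hT

variable [SecondCountableTopology F]

theorem memLp_id_map_of_finite [Finite Ω] [MeasurableSingletonClass Ω] [IsFiniteMeasure P]
    (y : Ω → F) : MemLp id p (P.map y) :=
  (memLp_map_measure_iff (by fun_prop) (measurable_of_finite y).aemeasurable).2 .of_discrete

theorem memLp_id_ofReal_iff {r : ℝ} (hr : 0 < r) {α : Measure F} :
    MemLp id (ENNReal.ofReal r) α ↔ Integrable (fun x ↦ ‖x‖ ^ r) α := by
  rw [← integrable_norm_rpow_iff (by fun_prop) (by simpa using hr) (by simp),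
    ENNReal.toReal_ofReal hr.le]
  rfl

end Lp

section Holder

variable {Ω F : Type*} [MeasurableSpace Ω] [NormedAddCommGroup F] [InnerProductSpace ℝ F]
  {p q : ℝ≥0∞} [p.HolderConjugate q] {P : Measure Ω} {X Y : Ω → F}

theorem integrable_inner (hX : MemLp X p P) (hY : MemLp Y q P) :
    Integrable (fun ω ↦ ⟪X ω, Y ω⟫) P :=
  memLp_one_iff_integrable.1 ((innerSL ℝ).memLp_of_bilin 1 hX hY)

theorem integral_inner_le_lpNorm_mul_lpNorm (hX : MemLp X p P) (hY : MemLp Y q P) :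
    ∫ ω, ⟪X ω, Y ω⟫ ∂P ≤ lpNorm X p P * lpNorm Y q P := by
  have hHolder : eLpNorm (fun ω ↦ ⟪X ω, Y ω⟫) 1 P ≤ eLpNorm X p P * eLpNorm Y q P := by
    simpa using eLpNorm_le_eLpNorm_mul_eLpNorm_of_nnnorm hX.1 hY.1 (fun x y : F ↦ ⟪x, y⟫) 1
      (.of_forall fun ω ↦ by simpa using nnnorm_inner_le_nnnorm (𝕜 := ℝ) (X ω) (Y ω))
  calc ∫ ω, ⟪X ω, Y ω⟫ ∂P ≤ ‖∫ ω, ⟪X ω, Y ω⟫ ∂P‖ := Real.le_norm_self _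
    _ ≤ ∫ ω, ‖⟪X ω, Y ω⟫‖ ∂P := norm_integral_le_integral_norm _
    _ = (eLpNorm (fun ω ↦ ⟪X ω, Y ω⟫) 1 P).toReal := by
      rw [toReal_eLpNorm (integrable_inner hX hY).1,
        lpNorm_one_eq_integral_norm (integrable_inner hX hY).1]
    _ ≤ (eLpNorm X p P * eLpNorm Y q P).toReal :=
      toReal_mono (ENNReal.mul_ne_top hX.2.ne hY.2.ne) hHolder
    _ = lpNorm X p P * lpNorm Y q P := by
      rw [toReal_mul, toReal_eLpNorm hX.1, toReal_eLpNorm hY.1]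

end Holder

section MaxAffine

variable {E ι : Type*} [NormedAddCommGroup E] [InnerProductSpace ℝ E]

/-- The maximum of the affine functions `x ↦ ⟪x, y i⟫ - g i`. For finite nonempty `ι` it is the
Legendre transform of `g`, seen as a function on the points `y i`. -/
def maxAffine (y : ι → E) (g : ι → ℝ) (x : E) : ℝ :=
  ⨆ i, (⟪x, y i⟫ - g i)

theorem integrable_inner_sub [MeasurableSpace E] {α : Measure E} [IsFiniteMeasure α]
    (hα : Integrable id α) (v : E) (c : ℝ) : Integrable (fun x ↦ ⟪x, v⟫ - c) α :=
  (hα.inner_const v).sub (integrable_const c)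

variable (y : ι → E) (g : ι → ℝ)

theorem maxAffine_le [Nonempty ι] {x : E} {c : ℝ} (h : ∀ i, ⟪x, y i⟫ - g i ≤ c) :
    maxAffine y g x ≤ c :=
  ciSup_le h

variable [Finite ι]

theorem inner_sub_le_maxAffine (x : E) (i : ι) : ⟪x, y i⟫ - g i ≤ maxAffine y g x :=
  le_ciSup (f := fun i ↦ ⟪x, y i⟫ - g i) (finite_range _).bddAbove i

theorem measurable_maxAffine [MeasurableSpace E] [BorelSpace E] : Measurable (maxAffine y g) :=
  .iSup fun i ↦ (Continuous.measurable (by fun_prop) : Measurable fun x ↦ ⟪x, y i⟫ - g i)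

variable [Nonempty ι]

theorem convexOn_maxAffine : ConvexOn ℝ univ (maxAffine y g) := by
  refine ⟨convex_univ, fun x _ z _ a b ha hb hab ↦ maxAffine_le y g fun i ↦ ?_⟩
  calc ⟪a • x + b • z, y i⟫ - g i = a * (⟪x, y i⟫ - g i) + b * (⟪z, y i⟫ - g i) := by
        rw [inner_add_left, real_inner_smul_left, real_inner_smul_left]
        linear_combination g i * hab
    _ ≤ a • maxAffine y g x + b • maxAffine y g z := by
        simp only [smul_eq_mul]
        gcongr <;> exact inner_sub_le_maxAffine y g _ i

theorem exists_eq_maxAffine (x : E) : ∃ i, ⟪x, y i⟫ - g i = maxAffine y g x :=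
  exists_eq_ciSup_of_finite

variable [MeasurableSpace E] [BorelSpace E]

theorem exists_measurable_eq_maxAffine [MeasurableSpace ι] :
    ∃ s : E → ι, Measurable s ∧ ∀ x, maxAffine y g x = ⟪x, y (s x)⟫ - g (s x) := by
  obtain ⟨s, hs, hmax⟩ := exists_measurable_argmax
    fun i ↦ (Continuous.measurable (by fun_prop) : Measurable fun x ↦ ⟪x, y i⟫ - g i)
  exact ⟨s, hs, fun x ↦
    (maxAffine_le y g (hmax x)).antisymm (inner_sub_le_maxAffine y g x (s x))⟩

theorem integrable_maxAffine {α : Measure E} [IsFiniteMeasure α] (hα : Integrable id α) :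
    Integrable (maxAffine y g) α := by
  have := Fintype.ofFinite ι
  have hbound : Integrable (fun x ↦ ∑ i, |⟪x, y i⟫ - g i|) α :=
    integrable_finsetSum _ fun i _ ↦ (integrable_inner_sub hα (y i) (g i)).abs
  refine hbound.mono' (measurable_maxAffine y g).aestronglyMeasurable (.of_forall fun x ↦ ?_)
  obtain ⟨i, hi⟩ := exists_eq_maxAffine y g x
  rw [← hi]
  exact Finset.single_le_sum (f := fun j ↦ |⟪x, y j⟫ - g j|) (fun j _ ↦ abs_nonneg _)
    (Finset.mem_univ i)

end MaxAffine

section CountableMaxAffine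

variable {E : Type*} [NormedAddCommGroup E] [InnerProductSpace ℝ E]

theorem exists_nat_isLUB_inner_sub [CompleteSpace E] [SecondCountableTopology E] {f : E → ℝ}
    (hf : ConvexOn ℝ univ f) (hcont : LowerSemicontinuous f) :
    ∃ (y : ℕ → E) (g : ℕ → ℝ), ∀ x, IsLUB (range fun i ↦ ⟪x, y i⟫ - g i) (f x) := by
  obtain ⟨l, c, hle, hsup⟩ := hf.univ_sSup_of_nat_affine_eq (𝕜 := ℝ) hcont
  refine ⟨fun i ↦ (InnerProductSpace.toDual ℝ E).symm (l i), fun i ↦ -c i, fun x ↦ ?_⟩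
  have heq : (fun i ↦ ⟪x, (InnerProductSpace.toDual ℝ E).symm (l i)⟫ - -c i)
      = fun i ↦ l i x + c i := by
    ext i
    rw [real_inner_comm, InnerProductSpace.toDual_symm_apply, sub_neg_eq_add]
  rw [heq, ← hsup, iSup_apply]
  exact isLUB_ciSup ⟨f x, by rintro _ ⟨i, rfl⟩; simpa using hle i x⟩

variable {y : ℕ → E} {g : ℕ → ℝ}

theorem maxAffine_fin_succ_le {x : E} {c : ℝ} (hc : IsLUB (range fun i ↦ ⟪x, y i⟫ - g i) c)
    (n : ℕ) : maxAffine (fun i : Fin (n + 1) ↦ y i) (fun i ↦ g i) x ≤ c :=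
  maxAffine_le _ _ fun i ↦ hc.1 ⟨i, rfl⟩

theorem tendsto_maxAffine_fin_succ {x : E} {c : ℝ}
    (hc : IsLUB (range fun i ↦ ⟪x, y i⟫ - g i) c) :
    Tendsto (fun n : ℕ ↦ maxAffine (fun i : Fin (n + 1) ↦ y i) (fun i ↦ g i) x) atTop (𝓝 c) := by
  refine tendsto_order.2 ⟨fun a ha ↦ ?_, fun a ha ↦ .of_forall fun n ↦ ?_⟩
  · obtain ⟨_, ⟨i, rfl⟩, hi, -⟩ := hc.exists_between ha
    filter_upwards [eventually_ge_atTop i] with n hn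
    exact hi.trans_le
      (inner_sub_le_maxAffine (fun i : Fin (n + 1) ↦ y i) (fun i ↦ g i) x ⟨i, by omega⟩)
  · exact (maxAffine_fin_succ_le hc n).trans_lt ha

theorem tendsto_integral_maxAffine_fin_succ [MeasurableSpace E] [BorelSpace E] {α : Measure E}
    [IsFiniteMeasure α] {f : E → ℝ} (hα : Integrable id α) (hfα : Integrable f α)
    (hf : ∀ x, IsLUB (range fun i ↦ ⟪x, y i⟫ - g i) (f x)) :
    Tendsto (fun n : ℕ ↦ ∫ x, maxAffine (fun i : Fin (n + 1) ↦ y i) (fun i ↦ g i) x ∂α) atTop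
      (𝓝 (∫ x, f x ∂α)) := by
  refine tendsto_integral_of_dominated_convergence (fun x ↦ |f x| + |⟪x, y 0⟫ - g 0|)
    (fun n ↦ (integrable_maxAffine _ _ hα).1)
    (hfα.abs.add (integrable_inner_sub hα (y 0) (g 0)).abs)
    (fun n ↦ .of_forall fun x ↦ ?_) (.of_forall fun x ↦ tendsto_maxAffine_fin_succ (hf x))
  have hle := maxAffine_fin_succ_le (hf x) n
  have hge := inner_sub_le_maxAffine (fun i : Fin (n + 1) ↦ y i) (fun i ↦ g i) x 0
  calc ‖maxAffine (fun i : Fin (n + 1) ↦ y i) (fun i ↦ g i) x‖ ≤ max |⟪x, y 0⟫ - g 0| |f x| :=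
        abs_le_max_abs_abs hge hle
    _ ≤ |⟪x, y 0⟫ - g 0| + |f x| := max_le_add_of_nonneg (abs_nonneg _) (abs_nonneg _)
    _ = |f x| + |⟪x, y 0⟫ - g 0| := add_comm _ _

end CountableMaxAffine

section OTcost

variable {d : ℕ} {Ω : Type*} [MeasurableSpace Ω] {p q : ℝ≥0∞} [p.HolderConjugate q]
  {α β : Measure (EuclideanSpace ℝ (Fin d))} {P : Measure Ω}

theorem bddAbove_integral_inner_couplings (hα : MemLp id p α) (hβ : MemLp id q β) :
    BddAbove {r : ℝ | ∃ π ∈ Couplings α β, r = ∫ z, ⟪z.1, z.2⟫ ∂π} := by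
  refine ⟨lpNorm id p α * lpNorm id q β, ?_⟩
  rintro _ ⟨π, ⟨hfst, hsnd⟩, rfl⟩
  have hfst' : MeasurePreserving Prod.fst π α := ⟨measurable_fst, hfst⟩
  have hsnd' : MeasurePreserving Prod.snd π β := ⟨measurable_snd, hsnd⟩
  rw [← lpNorm_comp_measurePreserving hα.1 hfst', ← lpNorm_comp_measurePreserving hβ.1 hsnd']
  exact integral_inner_le_lpNorm_mul_lpNorm (hα.comp_measurePreserving hfst')
    (hβ.comp_measurePreserving hsnd')

theorem integral_inner_le_OTcost {X Y : Ω → EuclideanSpace ℝ (Fin d)} (hX : MemLp X p P)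
    (hY : MemLp Y q P) : ∫ ω, ⟪X ω, Y ω⟫ ∂P ≤ OTcost (P.map X) (P.map Y) := by
  have hXm := hX.1.aemeasurable
  have hYm := hY.1.aemeasurable
  refine le_csSup (bddAbove_integral_inner_couplings (p := p) (q := q)
    ((memLp_map_measure_iff (by fun_prop) hXm).2 hX)
    ((memLp_map_measure_iff (by fun_prop) hYm).2 hY)) ⟨P.map fun ω ↦ (X ω, Y ω), ⟨?_, ?_⟩, ?_⟩
  · exact AEMeasurable.map_map_of_aemeasurable (by fun_prop) (hXm.prodMk hYm)
  · exact AEMeasurable.map_map_of_aemeasurable (by fun_prop) (hXm.prodMk hYm)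
  · rw [integral_map (hXm.prodMk hYm) (by fun_prop)]

theorem OTcost_map_le [IsProbabilityMeasure α] [IsProbabilityMeasure P]
    {T : Ω → EuclideanSpace ℝ (Fin d)} (hT : Measurable T) {c : ℝ}
    (h : ∀ γ : Measure (EuclideanSpace ℝ (Fin d) × Ω), MeasurePreserving Prod.fst γ α →
      MeasurePreserving Prod.snd γ P → ∫ z, ⟪z.1, T z.2⟫ ∂γ ≤ c) :
    OTcost α (P.map T) ≤ c := by
  have := Measure.isProbabilityMeasure_map (μ := P) hT.aemeasurable
  refine csSup_le ⟨_, α.prod (P.map T), ⟨by simp, by simp⟩, rfl⟩ ?_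
  rintro _ ⟨π, ⟨rfl, hsnd⟩, rfl⟩
  have : IsProbabilityMeasure π := Measure.isProbabilityMeasure_of_map Prod.fst
  obtain ⟨γ, hγ, rfl⟩ := exists_measure_map_snd_eq_map_prodMap_eq hT hsnd
  rw [integral_map (by fun_prop) (by fun_prop)]
  have hfst : MeasurePreserving Prod.fst γ ((γ.map (Prod.map id T)).map Prod.fst) :=
    ⟨measurable_fst, by rw [Measure.map_map (by fun_prop) (by fun_prop)]; rfl⟩
  exact h γ hfst ⟨measurable_snd, hγ⟩

theorem OTcost_map_le_add_lpNorm_mul_lpNorm [IsProbabilityMeasure α] [IsProbabilityMeasure P]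
    {T T' : Ω → EuclideanSpace ℝ (Fin d)} (hα : MemLp id p α) (hT : Measurable T)
    (hTq : MemLp T q P) (hT'q : MemLp T' q P) :
    OTcost α (P.map T) ≤ OTcost α (P.map T') + lpNorm id p α * lpNorm (T - T') q P := by
  refine OTcost_map_le hT fun γ hfst hsnd ↦ ?_
  have hX : MemLp Prod.fst p γ := hα.comp_measurePreserving hfst
  have hY : MemLp (T' ∘ Prod.snd) q γ := hT'q.comp_measurePreserving hsnd
  have hD : MemLp ((T - T') ∘ Prod.snd) q γ := (hTq.sub hT'q).comp_measurePreserving hsnd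
  calc ∫ z, ⟪z.1, T z.2⟫ ∂γ
      = ∫ z, ⟪z.1, (T' ∘ Prod.snd) z⟫ ∂γ + ∫ z, ⟪z.1, ((T - T') ∘ Prod.snd) z⟫ ∂γ := by
        rw [← integral_add (integrable_inner hX hY) (integrable_inner hX hD)]
        simp [← inner_add_right]
    _ ≤ OTcost (γ.map Prod.fst) (γ.map (T' ∘ Prod.snd))
        + lpNorm Prod.fst p γ * lpNorm ((T - T') ∘ Prod.snd) q γ :=
      add_le_add (integral_inner_le_OTcost hX hY) (integral_inner_le_lpNorm_mul_lpNorm hX hD)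
    _ = OTcost α (P.map T') + lpNorm id p α * lpNorm (T - T') q P := by
      rw [lpNorm_comp_measurePreserving (hTq.sub hT'q).1 hsnd, ← Function.id_comp Prod.fst,
        lpNorm_comp_measurePreserving hα.1 hfst, Function.id_comp, hfst.map_eq, ← hsnd.map_eq,
        AEMeasurable.map_map_of_aemeasurable (hsnd.map_eq ▸ hT'q.1.aemeasurable) (by fun_prop)]

theorem OTcost_map_le_integral_add_integral [IsProbabilityMeasure α] [IsProbabilityMeasure P]
    {T : Ω → EuclideanSpace ℝ (Fin d)} {f : EuclideanSpace ℝ (Fin d) → ℝ} {g : Ω → ℝ}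
    (hα : MemLp id p α) (hT : Measurable T) (hTq : MemLp T q P)
    (hf : Integrable f α) (hg : Integrable g P) (hle : ∀ x ω, ⟪x, T ω⟫ ≤ f x + g ω) :
    OTcost α (P.map T) ≤ ∫ x, f x ∂α + ∫ ω, g ω ∂P := by
  refine OTcost_map_le hT fun γ hfst hsnd ↦ ?_
  have hfγ : Integrable (fun z ↦ f z.1) γ := hfst.integrable_comp_of_integrable hf
  have hgγ : Integrable (fun z ↦ g z.2) γ := hsnd.integrable_comp_of_integrable hg
  calc ∫ z, ⟪z.1, T z.2⟫ ∂γ ≤ ∫ z, (f z.1 + g z.2) ∂γ :=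
        integral_mono (integrable_inner (hα.comp_measurePreserving hfst)
          (hTq.comp_measurePreserving hsnd)) (hfγ.add hgγ) fun z ↦ hle z.1 z.2
    _ = ∫ z, f z.1 ∂γ + ∫ z, g z.2 ∂γ := integral_add hfγ hgγ
    _ = ∫ x, f x ∂α + ∫ ω, g ω ∂P := by
      rw [← hfst.map_eq, ← hsnd.map_eq, integral_map (by fun_prop) (hfst.map_eq ▸ hf.1),
        integral_map (by fun_prop) (hsnd.map_eq ▸ hg.1)]

end OTcost

section TransportValue

variable {d : ℕ} {ι : Type*} [MeasurableSpace ι] {α : Measure (EuclideanSpace ℝ (Fin d))}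

/-- The maximal correlation of `α`, rescaled to the mass of `Q`, with the image of `Q` under `y`.
Allowing `Q` to have any mass makes it a concave function on a cone with nonempty interior. -/
def transportValue (α : Measure (EuclideanSpace ℝ (Fin d))) (y : ι → EuclideanSpace ℝ (Fin d))
    (Q : Measure ι) : ℝ :=
  OTcost (Q univ • α) (Q.map y)

theorem transportValue_eq_OTcost (y : ι → EuclideanSpace ℝ (Fin d)) (Q : Measure ι)
    [IsProbabilityMeasure Q] : transportValue α y Q = OTcost α (Q.map y) := by
  simp [transportValue]

theorem integrable_inner_of_mem_couplings {p q : ℝ≥0∞} [p.HolderConjugate q]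
    {α β : Measure (EuclideanSpace ℝ (Fin d))}
    {π : Measure (EuclideanSpace ℝ (Fin d) × EuclideanSpace ℝ (Fin d))} (hα : MemLp id p α)
    (hβ : MemLp id q β) (hπ : π ∈ Couplings α β) : Integrable (fun z ↦ ⟪z.1, z.2⟫) π :=
  integrable_inner (hα.comp_measurePreserving ⟨measurable_fst, hπ.1⟩)
    (hβ.comp_measurePreserving ⟨measurable_snd, hπ.2⟩)

theorem mul_sSup_add_mul_sSup_le {S S' : Set ℝ} (hS : S.Nonempty) (hS' : S'.Nonempty)
    (hSb : BddAbove S) (hSb' : BddAbove S') {a b c : ℝ} (ha : 0 ≤ a) (hb : 0 ≤ b)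
    (h : ∀ r ∈ S, ∀ r' ∈ S', a * r + b * r' ≤ c) : a * sSup S + b * sSup S' ≤ c := by
  rw [← smul_eq_mul, ← smul_eq_mul, ← Real.sSup_smul_of_nonneg ha, ← Real.sSup_smul_of_nonneg hb,
    ← csSup_add hS.smul_set (hSb.smul_of_nonneg ha) hS'.smul_set (hSb'.smul_of_nonneg hb)]
  refine csSup_le (hS.smul_set.add hS'.smul_set) ?_
  rintro _ ⟨_, ⟨r, hr, rfl⟩, _, ⟨r', hr', rfl⟩, rfl⟩
  exact h r hr r' hr'

variable [Finite ι] [MeasurableSingletonClass ι]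

theorem smul_add_smul_mem_couplings {a b : ℝ≥0∞}
    {π π' : Measure (EuclideanSpace ℝ (Fin d) × EuclideanSpace ℝ (Fin d))}
    {y : ι → EuclideanSpace ℝ (Fin d)} {Q Q' : Measure ι}
    (hπ : π ∈ Couplings (Q univ • α) (Q.map y)) (hπ' : π' ∈ Couplings (Q' univ • α) (Q'.map y)) :
    a • π + b • π' ∈ Couplings ((a • Q + b • Q') univ • α) ((a • Q + b • Q').map y) := by
  constructor
  · simp [Measure.map_add, measurable_fst, hπ.1, hπ'.1, add_smul, smul_smul]
  · simp [Measure.map_add, measurable_snd, measurable_of_finite y, hπ.2, hπ'.2]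

theorem couplings_smul_map_nonempty [IsProbabilityMeasure α] (y : ι → EuclideanSpace ℝ (Fin d))
    (Q : Measure ι) : (Couplings (Q univ • α) (Q.map y)).Nonempty :=
  ⟨α.prod (Q.map y), by simp [Measure.map_apply (measurable_of_finite y)], by simp⟩

theorem bddAbove_integral_inner_couplings_smul_map (hα : Integrable id α)
    (y : ι → EuclideanSpace ℝ (Fin d)) (Q : Measure ι) [IsFiniteMeasure Q] :
    BddAbove {r : ℝ | ∃ π ∈ Couplings (Q univ • α) (Q.map y), r = ∫ z, ⟪z.1, z.2⟫ ∂π} :=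
  bddAbove_integral_inner_couplings (q := ∞) ((memLp_one_iff_integrable.2 hα).smul_measure
    (measure_ne_top Q univ)) (memLp_id_map_of_finite y)

theorem mul_transportValue_add_mul_transportValue_le [IsProbabilityMeasure α] (hα : Integrable id α)
    (y : ι → EuclideanSpace ℝ (Fin d)) (Q Q' : Measure ι) [IsFiniteMeasure Q] [IsFiniteMeasure Q']
    {a b : ℝ} (ha : 0 ≤ a) (hb : 0 ≤ b) :
    a * transportValue α y Q + b * transportValue α y Q' ≤
      transportValue α y (ENNReal.ofReal a • Q + ENNReal.ofReal b • Q') := by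
  have hint {R : Measure ι} [IsFiniteMeasure R] {π} (hπ : π ∈ Couplings (R univ • α) (R.map y))
      (c : ℝ) : Integrable (fun z ↦ ⟪z.1, z.2⟫) (ENNReal.ofReal c • π) :=
    (integrable_inner_of_mem_couplings (q := ∞) ((memLp_one_iff_integrable.2 hα).smul_measure
      (measure_ne_top R univ)) (memLp_id_map_of_finite y) hπ).smul_measure ofReal_ne_top
  have hfin (c : ℝ) (R : Measure ι) [IsFiniteMeasure R] : IsFiniteMeasure (ENNReal.ofReal c • R) :=
    R.smul_finite ofReal_ne_top
  obtain ⟨π₀, hπ₀⟩ := couplings_smul_map_nonempty (α := α) y Q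
  obtain ⟨π₀', hπ₀'⟩ := couplings_smul_map_nonempty (α := α) y Q'
  refine mul_sSup_add_mul_sSup_le ?_ ?_ (bddAbove_integral_inner_couplings_smul_map hα y Q)
    (bddAbove_integral_inner_couplings_smul_map hα y Q') ha hb ?_
  · exact ⟨_, π₀, hπ₀, rfl⟩
  · exact ⟨_, π₀', hπ₀', rfl⟩
  rintro _ ⟨π, hπ, rfl⟩ _ ⟨π', hπ', rfl⟩
  refine le_csSup (bddAbove_integral_inner_couplings_smul_map hα y _)
    ⟨_, smul_add_smul_mem_couplings hπ hπ', ?_⟩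
  rw [integral_add_measure (hint hπ a) (hint hπ' b), integral_smul_measure, integral_smul_measure,
    toReal_ofReal ha, toReal_ofReal hb, smul_eq_mul, smul_eq_mul]

end TransportValue

section WeightedMeasure

variable {ι : Type*} [Fintype ι] [MeasurableSpace ι]

/-- The measure on a finite type with prescribed weights. Negative weights are replaced by `0`. -/
def weightedMeasure (w : ι → ℝ) : Measure ι :=
  ∑ i, ENNReal.ofReal (w i) • Measure.dirac i

instance (w : ι → ℝ) : IsFiniteMeasure (weightedMeasure w) :=
  ⟨by simp [weightedMeasure, ENNReal.sum_lt_top]⟩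

theorem weightedMeasure_add_smul {a b : ℝ} {u v : ι → ℝ} (ha : 0 ≤ a) (hb : 0 ≤ b) (hu : 0 ≤ u)
    (hv : 0 ≤ v) : weightedMeasure (a • u + b • v)
      = ENNReal.ofReal a • weightedMeasure u + ENNReal.ofReal b • weightedMeasure v := by
  simp only [weightedMeasure, Finset.smul_sum, ← Finset.sum_add_distrib, smul_smul, ← add_smul]
  refine Finset.sum_congr rfl fun i _ ↦ ?_
  rw [Pi.add_apply, Pi.smul_apply, Pi.smul_apply, smul_eq_mul, smul_eq_mul,
    ofReal_add (mul_nonneg ha (hu i)) (mul_nonneg hb (hv i)), ofReal_mul ha, ofReal_mul hb]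

variable [MeasurableSingletonClass ι]

theorem weightedMeasure_real_singleton (Q : Measure ι) [IsFiniteMeasure Q] :
    weightedMeasure (fun i ↦ Q.real {i}) = Q := by
  rw [weightedMeasure, ← Measure.sum_fintype]
  simpa only [ofReal_measureReal (measure_ne_top Q _)] using Q.sum_smul_dirac

theorem concaveOn_transportValue {d : ℕ} {α : Measure (EuclideanSpace ℝ (Fin d))}
    [IsProbabilityMeasure α] (hα : Integrable id α) (y : ι → EuclideanSpace ℝ (Fin d)) :
    ConcaveOn ℝ (Ici 0) fun w : ι → ℝ ↦ transportValue α y (weightedMeasure w) := by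
  refine ⟨convex_Ici 0, fun u hu v hv a b ha hb _ ↦ ?_⟩
  simp only [weightedMeasure_add_smul ha hb hu hv]
  exact mul_transportValue_add_mul_transportValue_le hα y _ _ ha hb

end WeightedMeasure

section Semidiscrete

variable {d : ℕ} {ι : Type*} [Finite ι] [MeasurableSpace ι] [MeasurableSingletonClass ι]
  {α μ ν : Measure (EuclideanSpace ℝ (Fin d))} [IsProbabilityMeasure α]
  [IsProbabilityMeasure μ] [IsProbabilityMeasure ν] (y : ι → EuclideanSpace ℝ (Fin d)) (g : ι → ℝ)

theorem exists_OTcost_map_add_integral_le (hα : Integrable id α) (P : Measure ι)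
    [IsProbabilityMeasure P] (hP : ∀ i, P {i} ≠ 0) :
    ∃ g : ι → ℝ, ∀ Q : Measure ι, IsProbabilityMeasure Q →
      OTcost α (Q.map y) + ∫ i, g i ∂P ≤ OTcost α (P.map y) + ∫ i, g i ∂Q := by
  classical
  have := Fintype.ofFinite ι
  have hconc := concaveOn_transportValue hα y
  have hnhds : Ici 0 ∈ 𝓝 fun i ↦ P.real {i} :=
    pi_Ici_mem_nhds fun i ↦ ENNReal.toReal_pos (hP i) (measure_ne_top P _)
  obtain ⟨L, hL⟩ := exists_supergradient hconc hnhds <|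
    hconc.continuousOn_interior.continuousAt (interior_mem_nhds.2 hnhds)
  have hintegral : ∀ Q : Measure ι, IsProbabilityMeasure Q →
      ∫ i, L (Pi.single i 1) ∂Q = L fun i ↦ Q.real {i} := fun Q _ ↦ by
    rw [integral_fintype .of_finite, ← Finset.univ_sum_single fun i ↦ Q.real {i}, map_sum]
    refine Finset.sum_congr rfl fun i _ ↦ ?_
    rw [← map_smul, ← Pi.single_smul, smul_eq_mul, mul_one]
  refine ⟨fun i ↦ L (Pi.single i 1), fun Q _ ↦ ?_⟩
  have hQ := hL (fun i ↦ Q.real {i}) fun i ↦ measureReal_nonneg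
  rw [weightedMeasure_real_singleton, weightedMeasure_real_singleton, transportValue_eq_OTcost,
    transportValue_eq_OTcost, map_sub] at hQ
  rw [hintegral P ‹_›, hintegral Q ‹_›]
  linarith

theorem OTcost_map_le_integral_maxAffine [Nonempty ι] (hα : Integrable id α) (P : Measure ι)
    [IsProbabilityMeasure P] :
    OTcost α (P.map y) ≤ ∫ x, maxAffine y g x ∂α + ∫ i, g i ∂P :=
  OTcost_map_le_integral_add_integral (memLp_one_iff_integrable.2 hα) (measurable_of_finite y)
    (MemLp.of_discrete (p := ∞)) (integrable_maxAffine y g hα) .of_finite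
    fun x i ↦ by linarith [inner_sub_le_maxAffine y g x i]

theorem exists_measurable_integral_maxAffine_add_integral_le [Nonempty ι] (hα : Integrable id α) :
    ∃ s : EuclideanSpace ℝ (Fin d) → ι, Measurable s ∧
      ∫ x, maxAffine y g x ∂α + ∫ i, g i ∂α.map s ≤ OTcost α ((α.map s).map y) := by
  obtain ⟨s, hs, hmax⟩ := exists_measurable_eq_maxAffine y g
  have hgs : Integrable (fun x ↦ g (s x)) α :=
    Integrable.comp_measurable (μ := α) (f := s) .of_finite hs
  refine ⟨s, hs, ?_⟩
  calc ∫ x, maxAffine y g x ∂α + ∫ i, g i ∂α.map s = ∫ x, ⟪id x, y (s x)⟫ ∂α := by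
        rw [integral_map hs.aemeasurable (by fun_prop),
          ← integral_add (integrable_maxAffine y g hα) hgs]
        simp [hmax]
    _ ≤ OTcost (α.map id) (α.map (y ∘ s)) :=
      integral_inner_le_OTcost (p := 1) (q := ∞) (memLp_one_iff_integrable.2 hα)
        (MemLp.comp_measurePreserving .of_discrete (hs.measurePreserving α))
    _ = OTcost α ((α.map s).map y) := by
      rw [Measure.map_id, Measure.map_map (measurable_of_finite y) hs]

theorem exists_integral_maxAffine_add_integral_le (hα : Integrable id α) (P : Measure ι)
    [IsProbabilityMeasure P] (hP : ∀ i, P {i} ≠ 0) :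
    ∃ g : ι → ℝ, ∫ x, maxAffine y g x ∂α + ∫ i, g i ∂P ≤ OTcost α (P.map y) := by
  have : Nonempty ι := P.nonempty_of_neZero
  obtain ⟨g, hg⟩ := exists_OTcost_map_add_integral_le y hα P hP
  obtain ⟨s, hs, hle⟩ := exists_measurable_integral_maxAffine_add_integral_le y g hα
  exact ⟨g, by linarith [hg (α.map s) (Measure.isProbabilityMeasure_map hs.aemeasurable)]⟩

theorem exists_integral_maxAffine_sub_le (hμ : Integrable id μ) (hν : Integrable id ν)
    (P : Measure ι) [IsProbabilityMeasure P] (hP : ∀ i, P {i} ≠ 0) :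
    ∃ g : ι → ℝ, ∫ x, maxAffine y g x ∂ν - ∫ x, maxAffine y g x ∂μ ≤
      OTcost ν (P.map y) - OTcost μ (P.map y) := by
  have : Nonempty ι := P.nonempty_of_neZero
  obtain ⟨g, hg⟩ := exists_integral_maxAffine_add_integral_le y hν P hP
  exact ⟨g, by linarith [OTcost_map_le_integral_maxAffine y g hμ P]⟩

theorem exists_OTcost_sub_le_integral_maxAffine_sub [Nonempty ι] (hμ : Integrable id μ)
    (hν : Integrable id ν) :
    ∃ Q : Measure ι, IsProbabilityMeasure Q ∧ OTcost ν (Q.map y) - OTcost μ (Q.map y) ≤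
      ∫ x, maxAffine y g x ∂ν - ∫ x, maxAffine y g x ∂μ := by
  obtain ⟨s, hs, hle⟩ := exists_measurable_integral_maxAffine_add_integral_le y g hμ
  have hQ := Measure.isProbabilityMeasure_map (μ := μ) hs.aemeasurable
  exact ⟨μ.map s, hQ, by linarith [OTcost_map_le_integral_maxAffine y g hν (μ.map s)]⟩

end Semidiscrete

section Duality

variable {d : ℕ} {p q : ℝ≥0∞} [p.HolderConjugate q]
  {μ ν : Measure (EuclideanSpace ℝ (Fin d))} [IsProbabilityMeasure μ] [IsProbabilityMeasure ν]

theorem exists_simpleFunc_OTcost_map_sub_le {ρ : Measure (EuclideanSpace ℝ (Fin d))}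
    [IsProbabilityMeasure ρ] (hμ : MemLp id p μ) (hν : MemLp id p ν) (hρ : MemLp id q ρ) {z : ℝ}
    (hz : OTcost ν ρ - OTcost μ ρ < z) :
    ∃ T : SimpleFunc (EuclideanSpace ℝ (Fin d)) (EuclideanSpace ℝ (Fin d)),
      OTcost ν (ρ.map T) - OTcost μ (ρ.map T) ≤ z := by
  have hM : 0 < lpNorm id p μ + lpNorm id p ν + 1 :=
    add_pos_of_nonneg_of_pos (add_nonneg lpNorm_nonneg lpNorm_nonneg) one_pos
  obtain ⟨T, hT⟩ := exists_simpleFunc_lpNorm_id_sub_lt hρ (div_pos (sub_pos.2 hz) hM)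
  have hTq := T.memLp_of_isFiniteMeasure q ρ
  have hνT := OTcost_map_le_add_lpNorm_mul_lpNorm hν T.measurable hTq hρ
  have hμT := OTcost_map_le_add_lpNorm_mul_lpNorm hμ measurable_id hρ hTq
  have hsmall := (lt_div_iff₀ hM).1 hT
  rw [Measure.map_id] at hνT hμT
  rw [lpNorm_sub_comm] at hνT
  refine ⟨T, ?_⟩
  linarith [lpNorm_nonneg (f := id - ⇑T) (p := q) (μ := ρ)]

theorem exists_convexOn_integral_sub_le {ρ : Measure (EuclideanSpace ℝ (Fin d))}
    [IsProbabilityMeasure ρ] (hμ : MemLp id p μ) (hν : MemLp id p ν) (hρ : MemLp id q ρ) {z : ℝ}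
    (hz : OTcost ν ρ - OTcost μ ρ < z) :
    ∃ f, ConvexOn ℝ univ f ∧ Integrable f μ ∧ Integrable f ν ∧
      ∫ x, f x ∂ν - ∫ x, f x ∂μ ≤ z := by
  have hp := ENNReal.HolderConjugate.one_le p q
  have hμ1 := hμ.integrable hp
  have hν1 := hν.integrable hp
  obtain ⟨T, hT⟩ := exists_simpleFunc_OTcost_map_sub_le hμ hν hρ hz
  have hrange : ∀ᵐ x ∂ρ.map T, x ∈ range T :=
    (ae_map_iff T.measurable.aemeasurable T.finite_range.measurableSet).2
      (.of_forall mem_range_self)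
  obtain ⟨S, hS, P, hP, hPT⟩ := exists_finite_measure_map_val_eq (ρ.map T) T.finite_range hrange
  have := hS.to_subtype
  have := Measure.isProbabilityMeasure_map (μ := ρ) T.measurable.aemeasurable
  have : IsProbabilityMeasure (P.map Subtype.val) := hPT ▸ this
  have : IsProbabilityMeasure P := Measure.isProbabilityMeasure_of_map Subtype.val
  have : Nonempty S := P.nonempty_of_neZero
  obtain ⟨g, hg⟩ := exists_integral_maxAffine_sub_le Subtype.val hμ1 hν1 P hP
  rw [hPT] at hg
  exact ⟨_, convexOn_maxAffine _ g, integrable_maxAffine _ g hμ1, integrable_maxAffine _ g hν1,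
    hg.trans hT⟩

theorem exists_OTcost_sub_le_of_convexOn {f : EuclideanSpace ℝ (Fin d) → ℝ} (hμ : Integrable id μ)
    (hν : Integrable id ν) (hf : ConvexOn ℝ univ f) (hfμ : Integrable f μ) (hfν : Integrable f ν)
    {z : ℝ} (hz : ∫ x, f x ∂ν - ∫ x, f x ∂μ < z) :
    ∃ ρ : Measure (EuclideanSpace ℝ (Fin d)), IsProbabilityMeasure ρ ∧ MemLp id ∞ ρ ∧
      OTcost ν ρ - OTcost μ ρ ≤ z := by
  have hcont : Continuous f := continuousOn_univ.1 (hf.continuousOn isOpen_univ)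
  obtain ⟨y, g, hlub⟩ := exists_nat_isLUB_inner_sub hf hcont.lowerSemicontinuous
  have hlim := (tendsto_integral_maxAffine_fin_succ hν hfν hlub).sub
    (tendsto_integral_maxAffine_fin_succ hμ hfμ hlub)
  obtain ⟨n, hn⟩ := (hlim.eventually_lt_const hz).exists
  obtain ⟨Q, hQ, hle⟩ := exists_OTcost_sub_le_integral_maxAffine_sub
    (fun i : Fin (n + 1) ↦ y i) (fun i ↦ g i) hμ hν
  exact ⟨_, Measure.isProbabilityMeasure_map .of_discrete, memLp_id_map_of_finite _,
    hle.trans hn.le⟩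

theorem stmt11_general (hμ : MemLp id p μ) (hν : MemLp id p ν) :
    sInf {r : EReal | ∃ f : EuclideanSpace ℝ (Fin d) → ℝ,
        ConvexOn ℝ univ f ∧ Integrable f μ ∧ Integrable f ν ∧
        r = ((∫ x, f x ∂ν - ∫ x, f x ∂μ : ℝ) : EReal)}
      = sInf {r : EReal | ∃ ρ : Measure (EuclideanSpace ℝ (Fin d)),
        IsProbabilityMeasure ρ ∧ MemLp id q ρ ∧
        r = ((OTcost ν ρ - OTcost μ ρ : ℝ) : EReal)} := by
  have hp := ENNReal.HolderConjugate.one_le p q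
  apply le_antisymm <;> refine le_sInf ?_
  · rintro _ ⟨ρ, _, hρ, rfl⟩
    refine EReal.le_of_forall_lt_iff_le.1 fun z hz ↦ ?_
    obtain ⟨f, hf, hfμ, hfν, hle⟩ :=
      exists_convexOn_integral_sub_le hμ hν hρ (EReal.coe_lt_coe_iff.1 hz)
    exact sInf_le_of_le ⟨f, hf, hfμ, hfν, rfl⟩ (EReal.coe_le_coe_iff.2 hle)
  · rintro _ ⟨f, hf, hfμ, hfν, rfl⟩
    refine EReal.le_of_forall_lt_iff_le.1 fun z hz ↦ ?_
    obtain ⟨ρ, hρ, hρ_top, hle⟩ := exists_OTcost_sub_le_of_convexOn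
      (hμ.integrable hp) (hν.integrable hp) hf hfμ hfν (EReal.coe_lt_coe_iff.1 hz)
    exact sInf_le_of_le ⟨ρ, hρ, hρ_top.mono_exponent le_top, rfl⟩ (EReal.coe_le_coe_iff.2 hle)

end Duality

theorem stmt11 (d : ℕ) (hd : 1 ≤ d) (p q : ℝ) (hp : 1 < p) (hpq : 1 / p + 1 / q = 1)
    (μ ν : Measure (EuclideanSpace ℝ (Fin d)))
    [IsProbabilityMeasure μ] [IsProbabilityMeasure ν]
    (hμ : Integrable (fun x => ‖x‖ ^ p) μ) (hν : Integrable (fun y => ‖y‖ ^ p) ν) :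
    sInf {r : EReal | ∃ f : EuclideanSpace ℝ (Fin d) → ℝ,
        ConvexOn ℝ Set.univ f ∧ Integrable f μ ∧ Integrable f ν ∧
        r = ((∫ x, f x ∂ν - ∫ x, f x ∂μ : ℝ) : EReal)}
      = sInf {r : EReal | ∃ ρ : Measure (EuclideanSpace ℝ (Fin d)),
        IsProbabilityMeasure ρ ∧ Integrable (fun z => ‖z‖ ^ q) ρ ∧
        r = ((OTcost ν ρ - OTcost μ ρ : ℝ) : EReal)} := by
  have hconj : p.HolderConjugate q := Real.holderConjugate_iff.2 ⟨hp, by simpa using hpq⟩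
  have := hconj.ennrealOfReal
  simpa only [memLp_id_ofReal_iff hconj.symm.pos] using
    stmt11_general (q := ENNReal.ofReal q) ((memLp_id_ofReal_iff hconj.pos).2 hμ)
      ((memLp_id_ofReal_iff hconj.pos).2 hν)
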